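/- The algebra A = Sg^C(Pol), the subalgebra of C generated by Pol, is simple, and moreover every subalgebra of A is simple. -/

import Mathlib

/- Formalization of quasi-polyadic equality set algebras over the weak space
   `V = {s : α → ℚ | s i ≠ 0 for finitely many i}`, where the infinite ordinal α
   is formalized as an infinite type. -/

open scoped Classical

namespace QPEA

variable {α : Type*}

/-- The weak space `V = ^αℚ^(0)`: functions with finite support. -/
def W (α : Type*) : Set (α → ℚ) := {s | {i | s i ≠ 0}.Finite}

/-- Cylindrification `c_i`. -/
def cyl (i : α) (X : Set (α → ℚ)) : Set (α → ℚ) :=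
  {s | s ∈ W α ∧ ∃ t ∈ X, ∀ j, j ≠ i → t j = s j}

/-- Diagonal element `d_ij`. -/
def diag (i j : α) : Set (α → ℚ) := {s | s ∈ W α ∧ s i = s j}

/-- Transposition substitution `s_[i,j]`. -/
noncomputable def sub (i j : α) (X : Set (α → ℚ)) : Set (α → ℚ) :=
  {s | s ∈ W α ∧ (s ∘ Equiv.swap i j) ∈ X}

/-- Membership in the subalgebra of the full quasi-polyadic equality set algebra `C`
    (with unit `V = W α`) generated by `S`. -/
inductive SgMem (S : Set (Set (α → ℚ))) : Set (α → ℚ) → Prop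
  | base {x : Set (α → ℚ)} : x ∈ S → SgMem S x
  | empty : SgMem S ∅
  | top : SgMem S (W α)
  | dgnl (i j : α) : SgMem S (diag i j)
  | union {x y : Set (α → ℚ)} : SgMem S x → SgMem S y → SgMem S (x ∪ y)
  | compl {x : Set (α → ℚ)} : SgMem S x → SgMem S (W α \ x)
  | cylin (i : α) {x : Set (α → ℚ)} : SgMem S x → SgMem S (cyl i x)
  | subst (i j : α) {x : Set (α → ℚ)} : SgMem S x → SgMem S (sub i j x)

/-- The subalgebra `Sg^C S` of `C` generated by `S`. -/
def Sg (S : Set (Set (α → ℚ))) : Set (Set (α → ℚ)) := {x | SgMem S x}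

/-- The element `[t, r] = {s ∈ V | t = Σ_i r_i s_i}`. -/
noncomputable def poly (t : ℚ) (r : α → ℚ) : Set (α → ℚ) :=
  {s | s ∈ W α ∧ t = ∑ᶠ i, r i * s i}

/-- `a_m = [m, 1]` where `1` is the constantly-one sequence. -/
noncomputable def aElem (m : ℕ) : Set (α → ℚ) := poly (m : ℚ) (fun _ => 1)

/-- `r ∈ ^αℚ^(0) ∪ ^αℚ^(1)`. -/
def weak01 (r : α → ℚ) : Prop := {i | r i ≠ 0}.Finite ∨ {i | r i ≠ 1}.Finite

/-- `Pol = {[t,r] : r ∈ ^αℚ^(0) ∪ ^αℚ^(1)}`. -/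
def Pol (α : Type*) : Set (Set (α → ℚ)) :=
  {X | ∃ t r, weak01 r ∧ X = poly t r}

/-- `Po = {[t,r] ∈ Pol : 0 ∈ range r} ∪ {d_ij : i ≠ j}`. -/
def Po (α : Type*) : Set (Set (α → ℚ)) :=
  {X | ∃ t r, weak01 r ∧ (∃ i, r i = 0) ∧ X = poly t r} ∪
    {X | ∃ i j : α, i ≠ j ∧ X = diag i j}

/-- `Pof = {[t, 1] : t ∈ ℚ}`. -/
def Pof (α : Type*) : Set (Set (α → ℚ)) := {X | ∃ t : ℚ, X = poly t (fun _ => 1)}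

/-- `X^S = {s_[i,j] x : x ∈ X, i, j < α}`. -/
def sClose (X : Set (Set (α → ℚ))) : Set (Set (α → ℚ)) :=
  {y | ∃ x ∈ X, ∃ i j : α, y = sub i j x}

/-- `X*`: finite intersections of elements of `X` and complements (rel. `V`) of
    elements of `X` (the empty intersection being `V`). -/
def star (X : Set (Set (α → ℚ))) : Set (Set (α → ℚ)) :=
  {p | ∃ (n : ℕ) (f : Fin n → Set (α → ℚ)),
      (∀ i, f i ∈ X ∨ ∃ q ∈ X, f i = W α \ q) ∧ p = W α ∩ ⋂ i, f i}

/-- `X**`: finite unions of elements of `X*` (the empty union being `∅`);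
    the Boolean subalgebra of `℘(V)` generated by `X`. -/
def dstar (X : Set (Set (α → ℚ))) : Set (Set (α → ℚ)) :=
  {p | ∃ (n : ℕ) (f : Fin n → Set (α → ℚ)), (∀ i, f i ∈ star X) ∧ p = ⋃ i, f i}

/-- `G(Y) = (Y^S ∪ Po)**`. -/
def G (Y : Set (Set (α → ℚ))) : Set (Set (α → ℚ)) := dstar (sClose Y ∪ Po α)

/-- `Poz`: elements of `G(Pol)` covered by finitely many elements of `Po`. -/
def Poz (α : Type*) : Set (Set (α → ℚ)) :=
  {x | x ∈ G (Pol α) ∧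
    ∃ (n : ℕ) (p : Fin n → Set (α → ℚ)), (∀ i, p i ∈ Po α) ∧ x ⊆ ⋃ i, p i}

/-- `Neg = G(∅) ∖ Poz`. -/
def Neg (α : Type*) : Set (Set (α → ℚ)) := G (∅ : Set (Set (α → ℚ))) \ Poz α

/-- An ideal of a subalgebra `B` of `C`: a nonempty subset of `B`, downward closed
    in `B`, closed under `∪`, and closed under the operations `c_i` and `s_[i,j]`. -/
def IsIdeal (B I : Set (Set (α → ℚ))) : Prop :=
  I.Nonempty ∧ I ⊆ B ∧
    (∀ x ∈ I, ∀ y ∈ B, y ⊆ x → y ∈ I) ∧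
    (∀ x ∈ I, ∀ y ∈ I, x ∪ y ∈ I) ∧
    (∀ x ∈ I, ∀ i : α, cyl i x ∈ I) ∧
    (∀ x ∈ I, ∀ i j : α, sub i j x ∈ I)

/-- `B` is simple: every ideal of `B` equals `{∅}` or all of `B`. -/
def Simple (B : Set (Set (α → ℚ))) : Prop :=
  ∀ I : Set (Set (α → ℚ)), IsIdeal B I → I = {∅} ∨ I = B

/-- A subuniverse of `C`: contains `∅`, `V`, all diagonals, and is closed under
    `∪`, complement relative to `V`, all `c_i` and all `s_[i,j]`. -/
def IsSubuniv (B : Set (Set (α → ℚ))) : Prop :=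
  (∅ : Set (α → ℚ)) ∈ B ∧ W α ∈ B ∧ (∀ i j : α, diag i j ∈ B) ∧
    (∀ x ∈ B, ∀ y ∈ B, x ∪ y ∈ B) ∧
    (∀ x ∈ B, W α \ x ∈ B) ∧
    (∀ i : α, ∀ x ∈ B, cyl i x ∈ B) ∧
    (∀ i j : α, ∀ x ∈ B, sub i j x ∈ B)

end QPEA

open QPEA

namespace QPEA

theorem upd_mem {α : Type*} {s : α → ℚ} (hs : s ∈ W α) (i : α) (u : ℚ) :
    Function.update s i u ∈ W α := by
  refine Set.Finite.subset (Set.Finite.insert i (show {i | s i ≠ 0}.Finite from hs)) ?_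
  intro j hj
  by_cases h : j = i
  · exact Or.inl h
  · right
    simpa [Function.update_of_ne h] using hj

theorem upd_sum {α : Type*} {s : α → ℚ} (hs : s ∈ W α) (i : α) (u : ℚ) :
    ∑ᶠ j, Function.update s i u j = (∑ᶠ j, s j) + (u - s i) := by
  have h1 : ∀ j, Function.update s i u j = s j + (Pi.single i (u - s i) : α → ℚ) j := by
    intro j
    by_cases h : j = i
    · subst h; simp
    · simp [h]
  have h2 : (Function.support (Pi.single i (u - s i) : α → ℚ)).Finite :=
    Set.Finite.subset (Set.finite_singleton i) (Pi.support_single_subset)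
  rw [finsum_congr h1, finsum_add_distrib hs h2]
  congr 1
  rw [finsum_eq_single _ i (fun j hj => by simp [hj])]
  simp

/-- The invariant: membership depends on finitely many coordinates and the total sum. -/
def Inv {α : Type*} (F : Finset α) (X : Set (α → ℚ)) : Prop :=
  X ⊆ W α ∧ ∀ s ∈ W α, ∀ s' ∈ W α, (∀ i ∈ F, s i = s' i) → (∑ᶠ i, s i = ∑ᶠ i, s' i) →
    s ∈ X → s' ∈ X

theorem Inv.mono {α : Type*} {F F' : Finset α} (h : F ⊆ F') {X : Set (α → ℚ)} (hX : Inv F X) :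
    Inv F' X :=
  ⟨hX.1, fun s hs s' hs' ha => hX.2 s hs s' hs' (fun i hi => ha i (h hi))⟩

theorem inv_poly {α : Type*} (t : ℚ) (r : α → ℚ) (hr : weak01 r) :
    ∃ F, Inv F (poly t r) := by
  rcases hr with hr | hr
  · refine ⟨hr.toFinset, fun s hs => hs.1, ?_⟩
    rintro s hs s' hs' ha - ⟨-, h⟩
    refine ⟨hs', h.trans (finsum_congr fun i => ?_)⟩
    by_cases hi : r i = 0
    · simp [hi]
    · rw [ha i (by simpa using hi)]
  · refine ⟨hr.toFinset, fun s hs => hs.1, ?_⟩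
    rintro s hs s' hs' ha hsum ⟨-, h⟩
    refine ⟨hs', h.trans ?_⟩
    have key : ∀ s ∈ W α, ∑ᶠ i, r i * s i = (∑ᶠ i, s i) + ∑ᶠ i, (r i - 1) * s i := by
      intro s hs
      rw [← finsum_add_distrib hs]
      · exact finsum_congr fun i => by ring
      · refine Set.Finite.subset (show {i | s i ≠ 0}.Finite from hs) ?_
        intro i hi h0
        apply hi
        simp [h0]
    rw [key s hs, key s' hs', hsum]
    congr 1
    refine finsum_congr fun i => ?_
    by_cases hi : r i = 1
    · simp [hi]
    · rw [ha i (by simpa using hi)]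

theorem comp_mem {α : Type*} {s : α → ℚ} (hs : s ∈ W α) (e : Equiv.Perm α) :
    s ∘ e ∈ W α :=
  Set.Finite.preimage (e.injective.injOn) (show {i | s i ≠ 0}.Finite from hs)

theorem inv_sg {α : Type*} {X : Set (α → ℚ)} (h : SgMem (Pol α) X) : ∃ F, Inv F X := by
  induction h with
  | base h =>
    obtain ⟨t, r, hr, rfl⟩ := h
    exact inv_poly t r hr
  | empty => exact ⟨∅, Set.empty_subset _, by simp⟩
  | top => exact ⟨∅, subset_rfl, fun s _ s' hs' _ _ _ => hs'⟩
  | dgnl i j =>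
    refine ⟨{i, j}, fun s hs => hs.1, ?_⟩
    rintro s hs s' hs' ha - ⟨-, h⟩
    refine ⟨hs', ?_⟩
    rw [← ha i (by simp), ← ha j (by simp), h]
  | union _ _ hx hy =>
    obtain ⟨F, hF⟩ := hx
    obtain ⟨F', hF'⟩ := hy
    have h1 := hF.mono (Finset.subset_union_left (s₂ := F'))
    have h2 := hF'.mono (Finset.subset_union_right (s₁ := F))
    refine ⟨F ∪ F', Set.union_subset h1.1 h2.1, ?_⟩
    rintro s hs s' hs' ha hsum (h | h)
    · exact Or.inl (h1.2 s hs s' hs' ha hsum h)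
    · exact Or.inr (h2.2 s hs s' hs' ha hsum h)
  | compl _ hx =>
    obtain ⟨F, hF⟩ := hx
    refine ⟨F, Set.diff_subset, ?_⟩
    rintro s hs s' hs' ha hsum ⟨-, h⟩
    exact ⟨hs', fun h' => h (hF.2 s' hs' s hs (fun i hi => (ha i hi).symm) hsum.symm h')⟩
  | cylin i _ hx =>
    obtain ⟨F, hF⟩ := hx
    have h1 := hF.mono (Finset.subset_insert i F)
    refine ⟨insert i F, fun s hs => hs.1, ?_⟩
    rintro s hs s' hs' ha hsum ⟨-, t, ht, hts⟩
    have e : t = Function.update s i (t i) := by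
      funext j
      by_cases h : j = i
      · subst h; simp
      · simp [h, hts j h]
    refine ⟨hs', Function.update s' i (t i), ?_, fun j hj => by simp [hj]⟩
    refine h1.2 t (h1.1 ht) _ (upd_mem hs' _ _) ?_ ?_ ht
    · intro j hj
      by_cases h : j = i
      · subst h; simp
      · simp [h, hts j h, ha j hj]
    · rw [upd_sum hs', e, upd_sum hs, hsum, ha i (by simp)]
      simp
  | subst i j _ hx =>
    obtain ⟨F, hF⟩ := hx
    refine ⟨insert i (insert j F), fun s hs => hs.1, ?_⟩
    rintro s hs s' hs' ha hsum ⟨-, h⟩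
    refine ⟨hs', hF.2 _ (comp_mem hs _) _ (comp_mem hs' _) ?_ ?_ h⟩
    · intro k hk
      apply ha
      rcases eq_or_ne k i with rfl | h1
      · simp
      rcases eq_or_ne k j with rfl | h2
      · simp
      rw [Equiv.swap_apply_of_ne_of_ne h1 h2]
      simp [hk]
    · have := finsum_comp_equiv (Equiv.swap i j) (f := s)
      have := finsum_comp_equiv (Equiv.swap i j) (f := s')
      simp only [Function.comp_apply]
      simp_all

theorem cyls {α : Type*} {I : Set (Set (α → ℚ))} (hI : ∀ x ∈ I, ∀ i : α, cyl i x ∈ I)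
    {X : Set (α → ℚ)} (hX : X ∈ I) (hW : X ⊆ W α) (F : Finset α) :
    {s | s ∈ W α ∧ ∃ t ∈ X, ∀ j, j ∉ F → t j = s j} ∈ I := by
  induction F using Finset.induction_on with
  | empty =>
    convert hX using 1
    ext s
    constructor
    · rintro ⟨_, t, ht, h⟩
      have : t = s := funext fun j => h j (by simp)
      exact this ▸ ht
    · intro h
      exact ⟨hW h, s, h, fun _ _ => rfl⟩
  | insert i F _ ih =>
    convert hI _ ih i using 1
    ext s
    constructor
    · rintro ⟨hs, t, ht, h⟩
      refine ⟨hs, Function.update s i (t i), ⟨upd_mem hs _ _, t, ht, ?_⟩,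
        fun j hj => by simp [hj]⟩
      intro j hj
      by_cases hji : j = i
      · subst hji; simp
      · simp [hji, h j (by simp [hji, hj])]
    · rintro ⟨hs, u, ⟨_, t, ht, h⟩, h'⟩
      refine ⟨hs, t, ht, fun j hj => ?_⟩
      simp only [Finset.mem_insert, not_or] at hj
      rw [h j hj.2, h' j hj.1]

theorem full {α : Type*} [Infinite α] {X : Set (α → ℚ)} {F : Finset α} (hF : Inv F X)
    (hne : X.Nonempty) : ∃ F' : Finset α,
      {s | s ∈ W α ∧ ∃ t ∈ X, ∀ j, j ∉ F' → t j = s j} = W α := by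
  obtain ⟨k, hk⟩ := Infinite.exists_notMem_finset F
  obtain ⟨x, hx⟩ := hne
  refine ⟨insert k F, Set.Subset.antisymm (fun s hs => hs.1) fun s hs => ⟨hs, ?_⟩⟩
  set y : α → ℚ := fun j => if j ∈ F then x j else s j with hy
  have hyW : y ∈ W α := by
    refine Set.Finite.subset (F.finite_toSet.union (show {i | s i ≠ 0}.Finite from hs)) ?_
    intro j hj
    by_cases h : j ∈ F
    · exact Or.inl h
    · right
      simpa [hy, h] using hj
  refine ⟨Function.update y k (y k + ((∑ᶠ j, x j) - ∑ᶠ j, y j)), ?_, ?_⟩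
  · refine hF.2 x (hF.1 hx) _ (upd_mem hyW _ _) ?_ ?_ hx
    · intro j hj
      have : j ≠ k := fun h => hk (h ▸ hj)
      simp [this, hy, hj]
    · rw [upd_sum hyW]; ring
  · intro j hj
    simp only [Finset.mem_insert, not_or] at hj
    simp [hj.1, hy, hj.2]

theorem simple_of_sub {α : Type*} [Infinite α] (B : Set (Set (α → ℚ)))
    (hB : B ⊆ Sg (Pol α)) : Simple B := by
  rintro I ⟨hne, hIB, hdown, -, hcyl, -⟩
  by_cases h : ∃ X ∈ I, X.Nonempty
  · right
    obtain ⟨X, hX, hXne⟩ := h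
    obtain ⟨F, hF⟩ := inv_sg (hB (hIB hX))
    obtain ⟨F', hF'⟩ := full hF hXne
    have hW : W α ∈ I := hF' ▸ cyls hcyl hX hF.1 F'
    refine Set.Subset.antisymm hIB fun Y hY => ?_
    obtain ⟨F2, hF2⟩ := inv_sg (hB hY)
    exact hdown _ hW Y hY hF2.1
  · left
    push Not at h
    exact Set.eq_singleton_iff_nonempty_unique_mem.2 ⟨hne, h⟩

end QPEA

/-- The algebra `A = Sg^C(Pol)` is simple, and every subalgebra of `A`
is simple. -/
theorem stmt4 {α : Type*} [Infinite α] :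
    Simple (Sg (Pol α)) ∧
    ∀ B : Set (Set (α → ℚ)), IsSubuniv B → B ⊆ Sg (Pol α) → Simple B :=
  ⟨simple_of_sub _ subset_rfl, fun B _ h => simple_of_sub B h⟩
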